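/- Let f(t) = Σ_k f_k G_k^{(n)}(t) with all f_k ≥ 0 and let P ⊂ S^{n−1}, |P| = m, be an f-design (so f(⟨p_i,p_j⟩)=0 for i≠j and M_k(P)=0 whenever k≥1 and f_k≠0). Then for every m-subset Y = {y_1,…,y_m} ⊂ S^{n−1}, Σ_{i<j} (−f(⟨y_i,y_j⟩)) ≤ 0 = Σ_{i<j} (−f(⟨p_i,p_j⟩)); hence P is an M-set for ρ(x,y) = −f(⟨x,y⟩). -/

import Mathlib

open scoped RealInnerProductSpace

/-- Gegenbauer polynomials for dimension `n`, normalized so that `Geg n k 1 = 1`. -/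
noncomputable def Geg (n : ℕ) : ℕ → ℝ → ℝ
  | 0 => fun _ => 1
  | 1 => fun t => t
  | (k + 2) => fun t =>
      ((2 * ((k : ℝ) + 2) + (n : ℝ) - 4) * t * Geg n (k + 1) t -
          (((k : ℝ) + 2) - 1) * Geg n k t) / (((k : ℝ) + 2) + (n : ℝ) - 3)

/-- The sum of the k smallest elements of a multiset of reals. -/
noncomputable def kSmallestSum (M : Multiset ℝ) (k : ℕ) : ℝ := ((M.sort (· ≤ ·)).take k).sum

/-- Weak majorization of multisets. -/
def WeakMaj (A B : Multiset ℝ) : Prop := ∀ k : ℕ, kSmallestSum B k ≤ kSmallestSum A k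

/-- The multiset of pairwise ρ-values of an m-point configuration. -/
def pairMultiset {S : Type*} {m : ℕ} (ρ : S → S → ℝ) (X : Fin m → S) : Multiset ℝ :=
  ((Finset.univ.filter (fun q : Fin m × Fin m => q.1 < q.2)).val).map
    (fun q => ρ (X q.1) (X q.2))

/-!
Everything rests on Schoenberg's theorem that the kernel `Geg n k ⟪x, y⟫` is positive semidefinite
on the unit sphere of an `n`-dimensional Euclidean space. For a unit vector `x`, the recursion of
the Gegenbauer polynomials, homogenized, defines a form `zonal x k` of degree `k` that restricts to
`y ↦ Geg n k ⟪x, y⟫` on the sphere and is harmonic. The Fischer inner product turns multiplication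
by `X i` into `∂ᵢ`; hence in a product of `zonal x k` with a harmonic form the `|X|²` term of the
recursion disappears, and Euler's identity shows that `zonal x k` reproduces harmonic forms up to a
positive constant. So `Geg n k ⟪x, y⟫` is, up to that constant, the Fischer product of `zonal x k`
and `zonal y k`.

Consequently `∑ i, ∑ j, f ⟪Y i, Y j⟫ ≥ c 0 * m ^ 2`, with equality for a design. The diagonal
contributes `m * f 1` for every configuration, so the sum over pairs is smallest for the design,
where all its terms vanish. Finally, a constant multiset weakly majorizes every multiset of the
same size with no larger sum.
-/

open MvPolynomial Module Matrix
open scoped Nat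

section Fischer

variable {σ R : Type*}

/-- The Fischer pairing of polynomials: distinct monomials are orthogonal, and `X ^ a` pairs with
itself to `∏ i, (a i)!`. It makes multiplication by `X i` adjoint to `pderiv i`. -/
noncomputable def fischer (σ R : Type*) [CommSemiring R] :
    LinearMap.BilinForm R (MvPolynomial σ R) :=
  (basisMonomials σ R).constr R fun a => ((a.prod fun _ k => k ! : ℕ) : R) • lcoeff R a

lemma fischer_monomial_left [CommSemiring R] (a : σ →₀ ℕ) (r : R) (Q : MvPolynomial σ R) :
    fischer σ R (monomial a r) Q = r * ((a.prod fun _ k => k ! : ℕ) * coeff a Q) := by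
  have hbasis : monomial a r = r • basisMonomials σ R a := by simp [smul_monomial]
  rw [hbasis, map_smul, fischer, Basis.constr_basis]
  simp [lcoeff]

lemma fischer_one_left [CommSemiring R] (Q : MvPolynomial σ R) :
    fischer σ R 1 Q = constantCoeff Q := by
  rw [← C_1, C_apply, fischer_monomial_left]
  simp [constantCoeff_eq]

lemma fischer_X_mul [CommSemiring R] (i : σ) (P Q : MvPolynomial σ R) :
    fischer σ R (X i * P) Q = fischer σ R P (pderiv i Q) := by
  induction P using MvPolynomial.induction_on' with
  | add P₁ P₂ h₁ h₂ => simp only [mul_add, map_add, LinearMap.add_apply, h₁, h₂]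
  | monomial a r =>
    have hfactorial : ((a + Finsupp.single i 1).prod fun _ k => k !) =
        (a i + 1) * a.prod fun _ k => k ! := by
      rw [← Finsupp.mul_prod_erase' _ i _ fun _ => Nat.factorial_zero,
        ← Finsupp.mul_prod_erase' a i _ fun _ => Nat.factorial_zero, ← mul_assoc]
      simp [Finsupp.erase_add, Nat.factorial_succ]
    rw [mul_comm, ← pow_one (X i), ← monomial_add_single, fischer_monomial_left,
      fischer_monomial_left, hfactorial, coeff_pderiv]
    push_cast
    ring

lemma fischer_self [CommSemiring R] (P : MvPolynomial σ R) :
    fischer σ R P P = ∑ a ∈ P.support, (a.prod fun _ k => k ! : ℕ) * (coeff a P * coeff a P) := by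
  conv_lhs => enter [1]; rw [P.as_sum]
  simp only [map_sum, LinearMap.sum_apply, fischer_monomial_left]
  exact Finset.sum_congr rfl fun a _ => mul_left_comm _ _ _

lemma fischer_isSymm [CommSemiring R] : (fischer σ R).IsSymm := by
  classical
  refine (LinearMap.BilinForm.isSymm_iff_basis (basisMonomials σ R)).2 fun a b => ?_
  rcases eq_or_ne a b with rfl | hab
  · rfl
  · simp [fischer_monomial_left, coeff_monomial, hab, hab.symm]

lemma fischer_isPosSemidef [CommRing R] [LinearOrder R] [IsStrictOrderedRing R] :
    (fischer σ R).IsPosSemidef where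
  eq := fischer_isSymm.eq
  nonneg P := by
    rw [fischer_self]
    exact Finset.sum_nonneg fun a _ => mul_nonneg (Nat.cast_nonneg _) (mul_self_nonneg _)

end Fischer

section DifferentialOperators

variable {σ R : Type*} [CommSemiring R]

lemma pderiv_pderiv_comm (i j : σ) (P : MvPolynomial σ R) :
    pderiv i (pderiv j P) = pderiv j (pderiv i P) := by
  rcases eq_or_ne i j with rfl | hij
  · rfl
  · ext a
    simp [coeff_pderiv, hij, hij.symm, add_right_comm _ (Finsupp.single i 1), mul_right_comm]

variable [Fintype σ]

/-- The linear form `⟨x, X⟩` with coefficient vector `x`. -/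
noncomputable def linForm (x : σ → R) : MvPolynomial σ R := ∑ i, x i • X i

/-- The directional derivative `⟨x, ∇⟩`. -/
noncomputable def dirDeriv (x : σ → R) : Derivation R (MvPolynomial σ R) (MvPolynomial σ R) :=
  ∑ i, x i • pderiv i

/-- The Laplace operator on polynomials. -/
noncomputable def polyLaplacian : MvPolynomial σ R →ₗ[R] MvPolynomial σ R :=
  ∑ i, (pderiv i).toLinearMap ∘ₗ (pderiv i).toLinearMap

lemma dirDeriv_apply (x : σ → R) (P : MvPolynomial σ R) :
    dirDeriv x P = ∑ i, x i • pderiv i P := by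
  have h := congrFun (map_sum Derivation.coeFnAddMonoidHom (fun i => x i • pderiv i) .univ) P
  exact h.trans (Finset.sum_apply _ _ _)

lemma polyLaplacian_apply (P : MvPolynomial σ R) :
    polyLaplacian P = ∑ i, pderiv i (pderiv i P) := by
  simp [polyLaplacian]

lemma pderiv_linForm (x : σ → R) (i : σ) : pderiv i (linForm x) = C (x i) := by
  classical
  simp [linForm, pderiv_X, Pi.single_apply, smul_eq_C_mul]

lemma pderiv_psum_two (i : σ) : pderiv i (psum σ R 2) = 2 * X i := by
  classical
  simp [psum, pderiv_X, Pi.single_apply]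

lemma dirDeriv_linForm (x y : σ → R) : dirDeriv x (linForm y) = C (x ⬝ᵥ y) := by
  simp [dirDeriv_apply, pderiv_linForm, dotProduct, smul_eq_C_mul]

lemma dirDeriv_psum_two (x : σ → R) : dirDeriv x (psum σ R 2) = 2 * linForm x := by
  simp [dirDeriv_apply, pderiv_psum_two, linForm, Finset.mul_sum]

lemma eval_linForm (x y : σ → R) : eval y (linForm x) = x ⬝ᵥ y := by
  simp [linForm, dotProduct, smul_eval]

lemma eval_psum_two (y : σ → R) : eval y (psum σ R 2) = y ⬝ᵥ y := by
  simp [psum, dotProduct, sq]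

lemma linForm_isHomogeneous (x : σ → R) : (linForm x).IsHomogeneous 1 :=
  .sum _ _ _ fun i _ => by
    simpa [smul_eq_C_mul] using (isHomogeneous_X R i).C_mul (x i)

lemma psum_isHomogeneous (k : ℕ) : (psum σ R k).IsHomogeneous k :=
  .sum _ _ _ fun i _ => isHomogeneous_X_pow i k

lemma dirDeriv_isHomogeneous {k : ℕ} (x : σ → R) {P : MvPolynomial σ R}
    (hP : P.IsHomogeneous (k + 1)) : (dirDeriv x P).IsHomogeneous k := by
  simp only [dirDeriv_apply, smul_eq_C_mul]
  exact .sum _ _ _ fun i _ => hP.pderiv.C_mul _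

lemma eval_dirDeriv_self {k : ℕ} (x : σ → R) {P : MvPolynomial σ R} (hP : P.IsHomogeneous k) :
    eval x (dirDeriv x P) = k * eval x P := by
  simpa [dirDeriv_apply, smul_eval] using congrArg (eval x) hP.sum_X_mul_pderiv

lemma polyLaplacian_linForm_mul (x : σ → R) (P : MvPolynomial σ R) :
    polyLaplacian (linForm x * P) = linForm x * polyLaplacian P + 2 * dirDeriv x P := by
  simp only [polyLaplacian_apply, dirDeriv_apply, Finset.mul_sum, ← Finset.sum_add_distrib]
  refine Finset.sum_congr rfl fun i _ => ?_
  simp only [pderiv_mul, map_add, pderiv_linForm, pderiv_C, smul_eq_C_mul]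
  ring

lemma polyLaplacian_psum_two_mul {k : ℕ} {P : MvPolynomial σ R} (hP : P.IsHomogeneous k) :
    polyLaplacian (psum σ R 2 * P) =
      psum σ R 2 * polyLaplacian P + (2 * Fintype.card σ + 4 * k : R) • P := by
  have hterm (i : σ) : pderiv i (pderiv i (psum σ R 2 * P)) =
      psum σ R 2 * pderiv i (pderiv i P) + (2 * P + 4 * (X i * pderiv i P)) := by
    have htwo : pderiv i (2 * X i : MvPolynomial σ R) = 2 := by
      rw [← map_ofNat C 2, pderiv_C_mul, pderiv_X_self, mul_one]
    simp only [pderiv_mul, map_add, pderiv_psum_two, htwo]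
    ring
  simp only [polyLaplacian_apply, hterm, Finset.sum_add_distrib, ← Finset.mul_sum,
    hP.sum_X_mul_pderiv, Finset.sum_const, Finset.card_univ, nsmul_eq_mul, smul_eq_C_mul,
    map_add, map_mul, map_natCast, map_ofNat]
  ring

lemma polyLaplacian_dirDeriv (x : σ → R) (P : MvPolynomial σ R) :
    polyLaplacian (dirDeriv x P) = dirDeriv x (polyLaplacian P) := by
  simp only [polyLaplacian_apply, dirDeriv_apply, map_sum, Derivation.map_smul]
  rw [Finset.sum_comm]
  refine Finset.sum_congr rfl fun i _ => Finset.sum_congr rfl fun j _ => ?_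
  rw [pderiv_pderiv_comm i j P, pderiv_pderiv_comm i j]

lemma fischer_linForm_mul (x : σ → R) (P Q : MvPolynomial σ R) :
    fischer σ R (linForm x * P) Q = fischer σ R P (dirDeriv x Q) := by
  simp [linForm, dirDeriv_apply, Finset.sum_mul, fischer_X_mul]

lemma fischer_psum_two_mul (P Q : MvPolynomial σ R) :
    fischer σ R (psum σ R 2 * P) Q = fischer σ R P (polyLaplacian Q) := by
  simp [psum, polyLaplacian_apply, Finset.sum_mul, sq, mul_assoc, fischer_X_mul]

end DifferentialOperators

section Zonal

variable {σ : Type*} [Fintype σ]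

/-- The homogenization of `y ↦ Geg n k (x ⬝ᵥ y)`, `n = Fintype.card σ`, obtained by inserting
`|X|² = psum σ ℝ 2` into the recursion of `Geg`. For a unit vector `x` it is the zonal harmonic of
degree `k` with pole `x`. -/
noncomputable def zonal (x : σ → ℝ) : ℕ → MvPolynomial σ ℝ
  | 0 => 1
  | 1 => linForm x
  | (k + 2) => ((k : ℝ) + Fintype.card σ - 1)⁻¹ •
      ((2 * (k : ℝ) + Fintype.card σ) • (linForm x * zonal x (k + 1)) -
        ((k : ℝ) + 1) • (psum σ ℝ 2 * zonal x k))

lemma zonal_isHomogeneous (x : σ → ℝ) (k : ℕ) : (zonal x k).IsHomogeneous k := by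
  induction k using Nat.twoStepInduction with
  | zero => exact isHomogeneous_one _ _
  | one => exact linForm_isHomogeneous x
  | more k ih₀ ih₁ =>
    have h₁ : (linForm x * zonal x (k + 1)).IsHomogeneous (k + 2) := by
      simpa only [add_comm 1] using (linForm_isHomogeneous x).mul ih₁
    have h₀ : (psum σ ℝ 2 * zonal x k).IsHomogeneous (k + 2) := by
      simpa only [add_comm 2] using (psum_isHomogeneous 2).mul ih₀
    simp only [zonal, smul_eq_C_mul]
    exact ((h₁.C_mul _).sub (h₀.C_mul _)).C_mul _

lemma eval_zonal (x : σ → ℝ) {y : σ → ℝ} (hy : y ⬝ᵥ y = 1) (k : ℕ) :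
    eval y (zonal x k) = Geg (Fintype.card σ) k (x ⬝ᵥ y) := by
  induction k using Nat.twoStepInduction with
  | zero => simp [zonal, Geg]
  | one => simp [zonal, Geg, eval_linForm]
  | more k ih₀ ih₁ =>
    simp only [zonal, Geg, smul_eval, map_sub, map_mul, eval_linForm, eval_psum_two, hy, ih₀, ih₁]
    rw [div_eq_inv_mul]
    congr 1
    · congr 1; ring
    · ring

lemma zonal_denom_pos (hσ : 2 ≤ Fintype.card σ) (k : ℕ) :
    (0 : ℝ) < (k : ℝ) + Fintype.card σ - 1 := by
  have : (2 : ℝ) ≤ Fintype.card σ := by exact_mod_cast hσ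
  linarith [k.cast_nonneg (α := ℝ)]

lemma smul_zonal_add_two (hσ : 2 ≤ Fintype.card σ) (x : σ → ℝ) (k : ℕ) :
    ((k : ℝ) + Fintype.card σ - 1) • zonal x (k + 2) =
      (2 * (k : ℝ) + Fintype.card σ) • (linForm x * zonal x (k + 1)) -
        ((k : ℝ) + 1) • (psum σ ℝ 2 * zonal x k) := by
  rw [zonal, smul_inv_smul₀ (zonal_denom_pos hσ k).ne']

lemma smul_dirDeriv_zonal_add_two (hσ : 2 ≤ Fintype.card σ) {x : σ → ℝ} (hx : x ⬝ᵥ x = 1)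
    (k : ℕ) :
    ((k : ℝ) + Fintype.card σ - 1) • dirDeriv x (zonal x (k + 2)) =
      (2 * (k : ℝ) + Fintype.card σ) •
          (zonal x (k + 1) + linForm x * dirDeriv x (zonal x (k + 1))) -
        ((k : ℝ) + 1) • (2 * linForm x * zonal x k + psum σ ℝ 2 * dirDeriv x (zonal x k)) := by
  rw [← Derivation.map_smul, smul_zonal_add_two hσ]
  simp only [map_sub, Derivation.map_smul, Derivation.leibniz, dirDeriv_linForm, hx,
    dirDeriv_psum_two, smul_eq_mul, C_1]
  ring_nf

lemma dirDeriv_zonal_succ (hσ : 2 ≤ Fintype.card σ) {x : σ → ℝ} (hx : x ⬝ᵥ x = 1) (k : ℕ) :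
    dirDeriv x (zonal x (k + 1)) = ((k : ℝ) + 1) • zonal x k := by
  induction k using Nat.twoStepInduction with
  | zero => simp [zonal, dirDeriv_linForm, hx]
  | one =>
    apply smul_right_injective _ (zonal_denom_pos hσ 0).ne'
    simp only [smul_dirDeriv_zonal_add_two hσ hx 0]
    simp only [zonal, dirDeriv_linForm, hx, smul_eq_C_mul, map_add, map_sub, map_mul, map_natCast,
      map_ofNat, map_one, map_zero, Derivation.map_one_eq_zero, Nat.cast_zero, Nat.cast_one]
    ring
  | more k ih₀ ih₁ =>
    apply smul_right_injective _ (zonal_denom_pos hσ (k + 1)).ne'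
    simp only [smul_dirDeriv_zonal_add_two hσ hx (k + 1), ih₀, ih₁]
    have hrec := smul_zonal_add_two hσ x k
    push_cast
    simp only [smul_eq_C_mul, map_add, map_sub, map_mul, map_natCast, map_ofNat, map_one] at hrec ⊢
    linear_combination -((k : MvPolynomial σ ℝ) + 2) * hrec

lemma polyLaplacian_zonal (hσ : 2 ≤ Fintype.card σ) {x : σ → ℝ} (hx : x ⬝ᵥ x = 1) (k : ℕ) :
    polyLaplacian (zonal x k) = 0 := by
  induction k using Nat.twoStepInduction with
  | zero => simp [zonal, polyLaplacian_apply]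
  | one => simp [zonal, polyLaplacian_apply, pderiv_linForm]
  | more k ih₀ ih₁ =>
    simp only [zonal, map_smul, map_sub, polyLaplacian_linForm_mul,
      polyLaplacian_psum_two_mul (zonal_isHomogeneous x k), ih₀, ih₁, dirDeriv_zonal_succ hσ hx]
    simp only [smul_eq_C_mul, map_add, map_mul, map_natCast, map_ofNat, map_one]
    ring

lemma exists_fischer_zonal_succ (hσ : 2 ≤ Fintype.card σ) (k : ℕ) :
    ∃ b : ℝ, 0 < b ∧ ∀ (x : σ → ℝ) (Q : MvPolynomial σ ℝ), polyLaplacian Q = 0 →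
      fischer σ ℝ (zonal x (k + 1)) Q = b * fischer σ ℝ (zonal x k) (dirDeriv x Q) := by
  cases k with
  | zero =>
    refine ⟨1, one_pos, fun x Q _ => ?_⟩
    rw [zonal, zonal, ← mul_one (linForm x), fischer_linForm_mul, one_mul]
  | succ k =>
    have hdenom := zonal_denom_pos hσ k
    refine ⟨((k : ℝ) + Fintype.card σ - 1)⁻¹ * (2 * k + Fintype.card σ), by positivity,
      fun x Q hQ => ?_⟩
    simp [zonal, fischer_linForm_mul, fischer_psum_two_mul, hQ, mul_assoc]

lemma exists_fischer_zonal_eq_mul_eval (hσ : 2 ≤ Fintype.card σ) (k : ℕ) :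
    ∃ A : ℝ, 0 < A ∧ ∀ (x : σ → ℝ) (Q : MvPolynomial σ ℝ), Q.IsHomogeneous k →
      polyLaplacian Q = 0 → fischer σ ℝ (zonal x k) Q = A * eval x Q := by
  induction k with
  | zero =>
    refine ⟨1, one_pos, fun x Q hQ _ => ?_⟩
    rw [← totalDegree_zero_iff_isHomogeneous, totalDegree_eq_zero_iff_eq_C] at hQ
    rw [zonal, fischer_one_left, hQ]
    simp
  | succ k ih =>
    obtain ⟨A, hA, hreproduce⟩ := ih
    obtain ⟨b, hb, hsucc⟩ := exists_fischer_zonal_succ hσ k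
    refine ⟨b * (A * (k + 1)), by positivity, fun x Q hQ hharm => ?_⟩
    have hharm' : polyLaplacian (dirDeriv x Q) = 0 := by
      rw [polyLaplacian_dirDeriv, hharm, map_zero]
    rw [hsucc x Q hharm, hreproduce x _ (dirDeriv_isHomogeneous x hQ) hharm',
      eval_dirDeriv_self x hQ]
    push_cast
    ring

end Zonal

section Schoenberg

variable {ι : Type*}

lemma posSemidef_of_bilinForm {V : Type*} [AddCommGroup V] [Module ℝ V]
    {B : LinearMap.BilinForm ℝ V} (hB : B.IsPosSemidef) (v : ι → V) :
    (Matrix.of fun i j => B (v i) (v j)).PosSemidef := by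
  refine ⟨Matrix.IsHermitian.ext fun i j => by simpa using hB.isSymm.eq _ _, fun w => ?_⟩
  have hsum : (w.sum fun i a => w.sum fun j b => star a * B (v i) (v j) * b) =
      B (w.sum fun i a => a • v i) (w.sum fun i a => a • v i) := by
    simp only [Finsupp.sum, map_sum, map_smul, LinearMap.sum_apply, LinearMap.smul_apply,
      smul_eq_mul, star_trivial, Finset.mul_sum]
    rw [Finset.sum_comm]
    exact Finset.sum_congr rfl fun i _ => Finset.sum_congr rfl fun j _ => by ring
  simpa only [Matrix.of_apply, hsum] using hB.nonneg _

lemma posSemidef_geg_dotProduct {σ : Type*} [Fintype σ] (hσ : 2 ≤ Fintype.card σ) (k : ℕ)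
    {v : ι → σ → ℝ} (hv : ∀ i, v i ⬝ᵥ v i = 1) :
    (Matrix.of fun i j => Geg (Fintype.card σ) k (v i ⬝ᵥ v j)).PosSemidef := by
  obtain ⟨A, hA, hreproduce⟩ := exists_fischer_zonal_eq_mul_eval hσ k
  have hgram : (Matrix.of fun i j => Geg (Fintype.card σ) k (v i ⬝ᵥ v j)) =
      A⁻¹ • Matrix.of fun i j => fischer σ ℝ (zonal (v i) k) (zonal (v j) k) := by
    ext i j
    have hfischer := hreproduce (v i) _ (zonal_isHomogeneous (v j) k)
      (polyLaplacian_zonal hσ (hv j) k)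
    simp [hfischer, eval_zonal _ (hv i), dotProduct_comm (v j), hA.ne']
  rw [hgram]
  exact (posSemidef_of_bilinForm fischer_isPosSemidef _).smul (inv_nonneg.2 hA.le)

variable {E : Type*} [NormedAddCommGroup E] [InnerProductSpace ℝ E] {n : ℕ} {Y : ι → E}

theorem posSemidef_geg_inner (hn : 2 ≤ n) (hE : finrank ℝ E = n) (k : ℕ)
    (hY : ∀ i, ‖Y i‖ = 1) : (Matrix.of fun i j => Geg n k ⟪Y i, Y j⟫).PosSemidef := by
  subst hE
  have : FiniteDimensional ℝ E := .of_finrank_pos (by omega)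
  let b := stdOrthonormalBasis ℝ E
  have hdot (x y : E) : (b.repr x).ofLp ⬝ᵥ (b.repr y).ofLp = ⟪x, y⟫ := by
    rw [← b.repr.inner_map_map, EuclideanSpace.inner_eq_star_dotProduct, star_trivial,
      dotProduct_comm]
  have h := posSemidef_geg_dotProduct (v := fun i => (b.repr (Y i)).ofLp) (by simpa using hn) k
    (by simp [hdot, hY])
  simpa only [hdot, Fintype.card_fin] using h

variable [Fintype ι]

/-- The `k`-th Gegenbauer moment `M_k(Y)` of the configuration `Y`. -/
noncomputable def gegMoment (n k : ℕ) (Y : ι → E) : ℝ := ∑ i, ∑ j, Geg n k ⟪Y i, Y j⟫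

lemma gegMoment_zero (n : ℕ) (Y : ι → E) : gegMoment n 0 Y = (Fintype.card ι : ℝ) ^ 2 := by
  simp [gegMoment, Geg, sq]

lemma gegMoment_nonneg (hn : 2 ≤ n) (hE : finrank ℝ E = n) (k : ℕ) (hY : ∀ i, ‖Y i‖ = 1) :
    0 ≤ gegMoment n k Y := by
  simpa [gegMoment, Matrix.mulVec, dotProduct] using
    (posSemidef_geg_inner hn hE k hY).dotProduct_mulVec_nonneg 1

end Schoenberg

section Energy

variable {ι : Type*} [Fintype ι]

lemma sum_sum_eq_sum_diag_add_two_nsmul_sum_lt {M : Type*} [AddCommMonoid M] [LinearOrder ι]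
    (g : ι → ι → M) (hg : ∀ i j, g i j = g j i) :
    ∑ i, ∑ j, g i j = ∑ i, g i i + 2 • ∑ q : ι × ι with q.1 < q.2, g q.1 q.2 := by
  have hsplit (i j : ι) : g i j = (if i = j then g i j else 0) +
      ((if i < j then g i j else 0) + (if j < i then g i j else 0)) := by
    rcases lt_trichotomy i j with h | h | h
    · simp [h, h.ne, h.not_gt]
    · simp [h]
    · simp [h, h.ne', h.not_gt]
  have hupper : ∑ i, ∑ j, (if i < j then g i j else 0) =
      ∑ q : ι × ι with q.1 < q.2, g q.1 q.2 := by
    rw [Finset.sum_filter, Fintype.sum_prod_type]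
  have hlower : ∑ i, ∑ j, (if j < i then g i j else 0) =
      ∑ i, ∑ j, if i < j then g i j else 0 := by
    rw [Finset.sum_comm]
    simp only [hg]
  calc ∑ i, ∑ j, g i j
      = ∑ i, ∑ j, ((if i = j then g i j else 0) +
          ((if i < j then g i j else 0) + (if j < i then g i j else 0))) :=
        Finset.sum_congr rfl fun i _ => Finset.sum_congr rfl fun j _ => hsplit i j
    _ = ∑ i, g i i + 2 • ∑ q : ι × ι with q.1 < q.2, g q.1 q.2 := by
        simp [Finset.sum_add_distrib, hlower, hupper, two_nsmul]

variable {E : Type*} [NormedAddCommGroup E] [InnerProductSpace ℝ E]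
  {n d : ℕ} {f : ℝ → ℝ} {c : ℕ → ℝ} {Y : ι → E}

lemma sum_sum_inner_eq_card_mul_add_two_mul_sum_lt [LinearOrder ι] (f : ℝ → ℝ)
    (hY : ∀ i, ‖Y i‖ = 1) :
    ∑ i, ∑ j, f ⟪Y i, Y j⟫ =
      Fintype.card ι * f 1 + 2 * ∑ q : ι × ι with q.1 < q.2, f ⟪Y q.1, Y q.2⟫ := by
  rw [sum_sum_eq_sum_diag_add_two_nsmul_sum_lt _ fun i j => by rw [real_inner_comm]]
  simp [hY]

lemma sum_sum_inner_eq_sum_gegMoment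
    (hf : ∀ t ∈ Set.Icc (-1 : ℝ) 1, f t = ∑ k ∈ Finset.range (d + 1), c k * Geg n k t)
    (hY : ∀ i, ‖Y i‖ = 1) :
    ∑ i, ∑ j, f ⟪Y i, Y j⟫ = ∑ k ∈ Finset.range (d + 1), c k * gegMoment n k Y := by
  have hmem (i j : ι) : ⟪Y i, Y j⟫ ∈ Set.Icc (-1 : ℝ) 1 :=
    abs_le.1 (by simpa [hY] using abs_real_inner_le_norm (Y i) (Y j))
  simp only [hf _ (hmem _ _), gegMoment, Finset.mul_sum]
  exact Finset.sum_comm_cycle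

lemma coeff_zero_mul_card_sq_le_sum_sum_inner (hn : 2 ≤ n) (hE : finrank ℝ E = n)
    (hc : ∀ k, 0 ≤ c k)
    (hf : ∀ t ∈ Set.Icc (-1 : ℝ) 1, f t = ∑ k ∈ Finset.range (d + 1), c k * Geg n k t)
    (hY : ∀ i, ‖Y i‖ = 1) :
    c 0 * (Fintype.card ι : ℝ) ^ 2 ≤ ∑ i, ∑ j, f ⟪Y i, Y j⟫ := by
  rw [sum_sum_inner_eq_sum_gegMoment hf hY, ← gegMoment_zero n Y]
  exact Finset.single_le_sum (f := fun k => c k * gegMoment n k Y)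
    (fun k _ => mul_nonneg (hc k) (gegMoment_nonneg hn hE k hY)) (by simp)

lemma sum_sum_inner_eq_of_design
    (hf : ∀ t ∈ Set.Icc (-1 : ℝ) 1, f t = ∑ k ∈ Finset.range (d + 1), c k * Geg n k t)
    (hY : ∀ i, ‖Y i‖ = 1) (hdes : ∀ k, 1 ≤ k → k ≤ d → c k ≠ 0 → gegMoment n k Y = 0) :
    ∑ i, ∑ j, f ⟪Y i, Y j⟫ = c 0 * (Fintype.card ι : ℝ) ^ 2 := by
  rw [sum_sum_inner_eq_sum_gegMoment hf hY, ← gegMoment_zero n Y]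
  refine Finset.sum_eq_single_of_mem 0 (by simp) fun k hk hk0 => ?_
  by_cases hck : c k = 0
  · rw [hck, zero_mul]
  · rw [hdes k (Nat.one_le_iff_ne_zero.2 hk0) (Finset.mem_range_succ_iff.1 hk) hck, mul_zero]

end Energy

section Majorization

lemma sum_take_le_length_nsmul {M : Type*} [AddCommGroup M] [LinearOrder M]
    [IsOrderedAddMonoid M] {l : List M} (hl : l.Pairwise (· ≤ ·)) {a : M}
    (hsum : l.sum ≤ l.length • a) (k : ℕ) : (l.take k).sum ≤ (l.take k).length • a := by
  rw [← List.take_append_drop k l, List.pairwise_append] at hl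
  rw [← List.take_append_drop k l, List.sum_append, List.length_append, add_nsmul] at hsum
  by_cases hle : ∀ x ∈ l.take k, x ≤ a
  · exact List.sum_le_card_nsmul _ _ hle
  · push Not at hle
    obtain ⟨x, hx, hax⟩ := hle
    have hdrop : (l.drop k).length • a ≤ (l.drop k).sum :=
      List.card_nsmul_le_sum _ _ fun y hy => hax.le.trans (hl.2.2 x hx y hy)
    exact le_of_add_le_add_right (hsum.trans (by gcongr))

lemma weakMaj_replicate {B : Multiset ℝ} {a : ℝ} (hB : B.sum ≤ B.card • a) :
    WeakMaj (Multiset.replicate B.card a) B := by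
  intro k
  have hsort : (B.sort (· ≤ ·)).sum ≤ (B.sort (· ≤ ·)).length • a := by
    rwa [← Multiset.sum_coe, Multiset.sort_eq, Multiset.length_sort]
  have htake := sum_take_le_length_nsmul (Multiset.pairwise_sort B (· ≤ ·)) hsort k
  have hreplicate : (Multiset.replicate B.card a).sort (· ≤ ·) = List.replicate B.card a :=
    List.eq_replicate_iff.2 ⟨by simp, fun x hx => Multiset.eq_of_mem_replicate (by simpa using hx)⟩
  simpa [kSmallestSum, hreplicate] using htake

lemma pairMultiset_eq_replicate {S : Type*} {m : ℕ} {ρ : S → S → ℝ} {X : Fin m → S} {a : ℝ}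
    (hX : ∀ i j, i < j → ρ (X i) (X j) = a) (Y : Fin m → S) :
    pairMultiset ρ X = Multiset.replicate (pairMultiset ρ Y).card a := by
  refine Multiset.eq_replicate.2 ⟨by simp [pairMultiset], fun x hx => ?_⟩
  obtain ⟨q, hq, rfl⟩ := Multiset.mem_map.1 hx
  exact hX _ _ (Finset.mem_filter.1 hq).2

end Majorization

/-- An f-design P (f with nonnegative Gegenbauer coefficients) satisfies
Σ_{i<j} (−f(⟨pᵢ,pⱼ⟩)) = 0, while every other m-point configuration Y of unit vectors has
Σ_{i<j} (−f(⟨yᵢ,yⱼ⟩)) ≤ 0; hence P is an M-set for ρ(x,y) = −f(⟨x,y⟩). -/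
theorem f_design_is_MSet {n m d : ℕ} (hn : 2 ≤ n) (f : ℝ → ℝ) (c : ℕ → ℝ)
    (hc : ∀ k, 0 ≤ c k)
    (hf : ∀ t ∈ Set.Icc (-1 : ℝ) 1, f t = ∑ k ∈ Finset.range (d + 1), c k * Geg n k t)
    (p : Fin m → EuclideanSpace ℝ (Fin n)) (hp : ∀ i, ‖p i‖ = 1)
    (hinj : Function.Injective p)
    (hz : ∀ i j, i ≠ j → f ⟪p i, p j⟫ = 0)
    (hdes : ∀ k, 1 ≤ k → k ≤ d → c k ≠ 0 → ∑ i, ∑ j, Geg n k ⟪p i, p j⟫ = 0) :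
    (∑ q ∈ Finset.univ.filter (fun q : Fin m × Fin m => q.1 < q.2),
        (-(f ⟪p q.1, p q.2⟫)) = 0) ∧
    ∀ Y : Fin m → EuclideanSpace ℝ (Fin n), (∀ i, ‖Y i‖ = 1) →
      (∑ q ∈ Finset.univ.filter (fun q : Fin m × Fin m => q.1 < q.2),
          (-(f ⟪Y q.1, Y q.2⟫)) ≤ 0) ∧
      WeakMaj (pairMultiset (fun x y => -(f ⟪x, y⟫)) p)
        (pairMultiset (fun x y => -(f ⟪x, y⟫)) Y) := by
  have hdim : finrank ℝ (EuclideanSpace ℝ (Fin n)) = n := finrank_euclideanSpace_fin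
  have hpairs : ∀ i j, i < j → -(f ⟪p i, p j⟫) = 0 := fun i j hij => by
    rw [hz i j hij.ne, neg_zero]
  have hsum : ∑ q : Fin m × Fin m with q.1 < q.2, -(f ⟪p q.1, p q.2⟫) = 0 :=
    Finset.sum_eq_zero fun q hq => hpairs _ _ (Finset.mem_filter.1 hq).2
  refine ⟨hsum, fun Y hY => ?_⟩
  have henergy : ∑ i, ∑ j, f ⟪p i, p j⟫ ≤ ∑ i, ∑ j, f ⟪Y i, Y j⟫ :=
    (sum_sum_inner_eq_of_design hf hp hdes).trans_le
      (coeff_zero_mul_card_sq_le_sum_sum_inner hn hdim hc hf hY)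
  have hle : ∑ q : Fin m × Fin m with q.1 < q.2, -(f ⟪Y q.1, Y q.2⟫) ≤ 0 := by
    rw [sum_sum_inner_eq_card_mul_add_two_mul_sum_lt f hp,
      sum_sum_inner_eq_card_mul_add_two_mul_sum_lt f hY] at henergy
    rw [Finset.sum_neg_distrib] at hsum ⊢
    linarith
  refine ⟨hle, ?_⟩
  rw [pairMultiset_eq_replicate (ρ := fun x y => -(f ⟪x, y⟫)) hpairs Y]
  exact weakMaj_replicate (hle.trans_eq (smul_zero _).symm)
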